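/- arXiv:2303.17993 — 10 statements merged into one kernel-verified Lean document; each statement's English description precedes it below -/
import Mathlib

section
/- Every sl(V)-invariant bilinear map B : sl(V) × sl(V) → sl(V) is a scalar multiple of the Lie bracket: there exists c ∈ F such that B(f,g) = c • (f ∘ g − g ∘ f) for all f, g ∈ sl(V). -/
/-!
In a basis of `V` the claim is about `2 × 2` matrices, with the standard basis `H, E, G` of `sl₂`
(`[H, E] = 2E`, `[H, G] = -2G`, `[E, G] = H`). Invariance under `H` makes `B` additive on weights,
and the weights of `sl₂` are `2, 0, -2`, each with multiplicity one. Hence `B(E, E)`, of weight `4`,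
vanishes (this is where `6 ≠ 0` enters), likewise `B(G, G) = 0`, and every other value of `B` on
basis vectors is a multiple of a basis vector. Invariance under `E` and `G` relates these multiples:
applying `ad G` to `B(E, E) = 0` shows that `B(H, H) = 0`, and the remaining ones are determined by
`B(H, E) = β E` and agree with `(β / 2) [·, ·]`.
-/

namespace SlTwo

open Matrix

attribute [local instance] LieRing.ofAssociativeRing

/-- The semisimple element of the standard basis of `sl₂`. -/
def H (F : Type*) [Field F] : Matrix (Fin 2) (Fin 2) F := !![1, 0; 0, -1]

/-- The raising element of the standard basis of `sl₂`. -/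
def E (F : Type*) [Field F] : Matrix (Fin 2) (Fin 2) F := !![0, 1; 0, 0]

/-- The lowering element of the standard basis of `sl₂`. -/
def G (F : Type*) [Field F] : Matrix (Fin 2) (Fin 2) F := !![0, 0; 1, 0]

variable {F : Type*} [Field F]

lemma trace_H : (H F).trace = 0 := by simp [H, trace_fin_two]
lemma trace_E : (E F).trace = 0 := by simp [E, trace_fin_two]
lemma trace_G : (G F).trace = 0 := by simp [G, trace_fin_two]

lemma lie_HE : ⁅H F, E F⁆ = (2 : F) • E F := by
  ext i j; fin_cases i <;> fin_cases j <;> simp [H, E, Ring.lie_def]; norm_num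
lemma lie_HG : ⁅H F, G F⁆ = (-2 : F) • G F := by
  ext i j; fin_cases i <;> fin_cases j <;> simp [H, G, Ring.lie_def]; norm_num
lemma lie_EG : ⁅E F, G F⁆ = H F := by
  ext i j; fin_cases i <;> fin_cases j <;> simp [H, E, G, Ring.lie_def]
lemma lie_EH : ⁅E F, H F⁆ = (-2 : F) • E F := by
  rw [← lie_skew, lie_HE, neg_smul]
lemma lie_GH : ⁅G F, H F⁆ = (2 : F) • G F := by
  rw [← lie_skew, lie_HG, neg_smul, neg_neg]
lemma lie_GE : ⁅G F, E F⁆ = -H F := by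
  rw [← lie_skew, lie_EG]

lemma eq_combination {f : Matrix (Fin 2) (Fin 2) F} (hf : f.trace = 0) :
    f = f 0 0 • H F + f 0 1 • E F + f 1 0 • G F := by
  rw [trace_fin_two] at hf
  ext i j; fin_cases i <;> fin_cases j <;> simp [H, E, G]
  linear_combination hf

lemma lie_H (X : Matrix (Fin 2) (Fin 2) F) :
    ⁅H F, X⁆ = !![0, 2 * X 0 1; -2 * X 1 0, 0] := by
  ext i j; fin_cases i <;> fin_cases j <;>
    simp [H, Ring.lie_def, mul_apply, vecMul, dotProduct, Fin.sum_univ_two] <;> ring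

/-- The matrix units `E₀₀, E₁₁` have weight `0` under `ad H`, while `E₀₁` and `E₁₀` have weights
`2` and `-2`; the `k`-eigenspace of `ad H` only involves those of weight `k`. -/
lemma weight_entries {X : Matrix (Fin 2) (Fin 2) F} {k : F} (h : ⁅H F, X⁆ = k • X) :
    k * X 0 0 = 0 ∧ (k - 2) * X 0 1 = 0 ∧ (k + 2) * X 1 0 = 0 ∧ k * X 1 1 = 0 := by
  rw [lie_H] at h
  have h00 := congr_fun₂ h 0 0
  have h01 := congr_fun₂ h 0 1
  have h10 := congr_fun₂ h 1 0
  have h11 := congr_fun₂ h 1 1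
  simp only [of_apply, cons_val', cons_val_zero, cons_val_one, Matrix.smul_apply, smul_eq_mul,
    cons_val_fin_one] at h00 h01 h10 h11
  refine ⟨?_, ?_, ?_, ?_⟩
  · linear_combination -h00
  · linear_combination -h01
  · linear_combination -h10
  · linear_combination -h11

lemma weight_eq_zero {X : Matrix (Fin 2) (Fin 2) F} {k : F} (h : ⁅H F, X⁆ = k • X)
    (h0 : k ≠ 0) (hp : k - 2 ≠ 0) (hm : k + 2 ≠ 0) : X = 0 := by
  obtain ⟨h1, h2, h3, h4⟩ := weight_entries h
  ext i j; fin_cases i <;> fin_cases j <;> simp_all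

lemma weight_two (h2 : (2 : F) ≠ 0) {X : Matrix (Fin 2) (Fin 2) F} (h : ⁅H F, X⁆ = (2 : F) • X) :
    ∃ a : F, X = a • E F := by
  have h4 : (2 + 2 : F) ≠ 0 := by
    rw [← two_mul]; exact mul_ne_zero h2 h2
  obtain ⟨h00, -, h10, h11⟩ := weight_entries h
  refine ⟨X 0 1, ?_⟩
  ext i j; fin_cases i <;> fin_cases j <;> simp_all [E]

lemma weight_neg_two (h2 : (2 : F) ≠ 0) {X : Matrix (Fin 2) (Fin 2) F}
    (h : ⁅H F, X⁆ = (-2 : F) • X) : ∃ a : F, X = a • G F := by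
  have h4 : (-2 - 2 : F) ≠ 0 := by
    rw [show (-2 - 2 : F) = -(2 * 2) by ring]; exact neg_ne_zero.2 (mul_ne_zero h2 h2)
  obtain ⟨h00, h01, -, h11⟩ := weight_entries h
  refine ⟨X 1 0, ?_⟩
  ext i j; fin_cases i <;> fin_cases j <;> simp_all [G]

lemma weight_zero (h2 : (2 : F) ≠ 0) {X : Matrix (Fin 2) (Fin 2) F} (ht : X.trace = 0)
    (h : ⁅H F, X⁆ = 0) : ∃ a : F, X = a • H F := by
  obtain ⟨-, h01, h10, -⟩ := weight_entries (k := 0) (h.trans (zero_smul F X).symm)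
  have e01 : X 0 1 = 0 := by simpa [h2] using h01
  have e10 : X 1 0 = 0 := by simpa [h2] using h10
  refine ⟨X 0 0, ?_⟩
  conv_lhs => rw [eq_combination ht, e01, e10]
  simp

lemma E_smul_eq_zero {a : F} (h : a • E F = 0) : a = 0 := by
  simpa [E] using congr_fun₂ h 0 1

lemma H_smul_eq_zero {a : F} (h : a • H F = 0) : a = 0 := by
  simpa [H] using congr_fun₂ h 0 0

/-- The theorem for `V = F²`, with endomorphisms written as matrices. -/
theorem matrix_case (h2 : (2 : F) ≠ 0) (h3 : (3 : F) ≠ 0)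
    (B : Matrix (Fin 2) (Fin 2) F →ₗ[F] Matrix (Fin 2) (Fin 2) F →ₗ[F] Matrix (Fin 2) (Fin 2) F)
    (hB0 : ∀ f g, f.trace = 0 → g.trace = 0 → (B f g).trace = 0)
    (hinv : ∀ x f g : Matrix (Fin 2) (Fin 2) F, x.trace = 0 → f.trace = 0 → g.trace = 0 →
      ⁅x, B f g⁆ = B ⁅x, f⁆ g + B f ⁅x, g⁆) :
    ∃ c : F, ∀ f g, f.trace = 0 → g.trace = 0 → B f g = c • (f * g - g * f) := by
  have h4 : (4 : F) ≠ 0 := by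
    rw [show (4 : F) = 2 * 2 by norm_num]; exact mul_ne_zero h2 h2
  have h6 : (6 : F) ≠ 0 := by
    rw [show (6 : F) = 2 * 3 by norm_num]; exact mul_ne_zero h2 h3
  have tH := trace_H (F := F)
  have tE := trace_E (F := F)
  have tG := trace_G (F := F)
  have hEE : B (E F) (E F) = 0 := by
    refine weight_eq_zero (k := 4) ?_ h4 (by convert h2 using 1; norm_num)
      (by convert h6 using 1; norm_num)
    rw [hinv _ _ _ tH tE tE, lie_HE, map_smul, map_smul, LinearMap.smul_apply]
    module
  have hGG : B (G F) (G F) = 0 := by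
    refine weight_eq_zero (k := -4) ?_ (neg_ne_zero.2 h4)
      (by convert neg_ne_zero.2 h6 using 1; norm_num)
      (by convert neg_ne_zero.2 h2 using 1; norm_num)
    rw [hinv _ _ _ tH tG tG, lie_HG, map_smul, map_smul, LinearMap.smul_apply]
    module
  -- By weights, each remaining value of `B` on basis vectors lies on a line spanned by one of them.
  obtain ⟨α, hα⟩ : ∃ a : F, B (H F) (H F) = a • H F := by
    refine weight_zero h2 (hB0 _ _ tH tH) ?_
    rw [hinv _ _ _ tH tH tH]; simp
  obtain ⟨β, hβ⟩ : ∃ a : F, B (H F) (E F) = a • E F := by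
    refine weight_two h2 ?_
    rw [hinv _ _ _ tH tH tE, lie_HE]; simp
  obtain ⟨γ, hγ⟩ : ∃ a : F, B (H F) (G F) = a • G F := by
    refine weight_neg_two h2 ?_
    rw [hinv _ _ _ tH tH tG, lie_HG]; simp
  obtain ⟨β', hβ'⟩ : ∃ a : F, B (E F) (H F) = a • E F := by
    refine weight_two h2 ?_
    rw [hinv _ _ _ tH tE tH, lie_HE]; simp
  obtain ⟨γ', hγ'⟩ : ∃ a : F, B (G F) (H F) = a • G F := by
    refine weight_neg_two h2 ?_
    rw [hinv _ _ _ tH tG tH, lie_HG]; simp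
  obtain ⟨δ, hδ⟩ : ∃ a : F, B (E F) (G F) = a • H F := by
    refine weight_zero h2 (hB0 _ _ tE tG) ?_
    rw [hinv _ _ _ tH tE tG, lie_HE, lie_HG]; simp
  obtain ⟨ε, hε⟩ : ∃ a : F, B (G F) (E F) = a • H F := by
    refine weight_zero h2 (hB0 _ _ tG tE) ?_
    rw [hinv _ _ _ tH tG tE, lie_HE, lie_HG]; simp
  -- Invariance under `E` and `G` gives linear relations between the coefficients.
  have r1 : β + β' = 0 := by
    have h := hinv _ _ _ tG tE tE
    rw [hEE, lie_GE, lie_zero, map_neg, map_neg, LinearMap.neg_apply, hβ, hβ'] at h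
    apply E_smul_eq_zero
    linear_combination (norm := module) h
  have r2 : -2 * α + 2 * (β + β') = 0 := by
    have h := hinv _ _ _ tE tH tH
    rw [hα, lie_EH, lie_smul, lie_EH, map_smul, map_smul, LinearMap.smul_apply, hβ, hβ'] at h
    apply E_smul_eq_zero
    linear_combination (norm := module) h
  have r3 : -β - 2 * ε + α = 0 := by
    have h := hinv _ _ _ tG tH tE
    rw [hβ, lie_GH, lie_GE, lie_smul, lie_GE, map_smul, map_neg, LinearMap.smul_apply, hε, hα] at h
    apply H_smul_eq_zero
    linear_combination (norm := module) h
  have r4 : -β' + α - 2 * δ = 0 := by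
    have h := hinv _ _ _ tG tE tH
    rw [hβ', lie_GH, lie_GE, lie_smul, lie_GE, map_smul, map_neg, LinearMap.neg_apply, hδ, hα] at h
    apply H_smul_eq_zero
    linear_combination (norm := module) h
  have r5 : γ + 2 * δ - α = 0 := by
    have h := hinv _ _ _ tE tH tG
    rw [hγ, lie_EH, lie_EG, lie_smul, lie_EG, map_smul, LinearMap.smul_apply, hδ, hα] at h
    apply H_smul_eq_zero
    linear_combination (norm := module) h
  have r6 : γ' - α + 2 * ε = 0 := by
    have h := hinv _ _ _ tE tG tH
    rw [hγ', lie_EH, lie_EG, lie_smul, lie_EG, map_smul, hε, hα] at h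
    apply H_smul_eq_zero
    linear_combination (norm := module) h
  have eα : α = 0 := by
    refine (mul_eq_zero.1 ?_).resolve_left h2
    linear_combination 2 * r1 - r2
  subst eα
  have eβ : β = 2 * δ := by linear_combination r1 + r4
  have eβ' : β' = -2 * δ := by linear_combination -r4
  have eγ : γ = -2 * δ := by linear_combination r5
  have eε : ε = -δ := by
    refine mul_left_cancel₀ h2 ?_
    linear_combination -r3 - eβ
  have eγ' : γ' = 2 * δ := by linear_combination r6 - 2 * eε
  subst eβ eβ' eγ eε eγ'
  refine ⟨δ, fun f g hf hg => ?_⟩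
  rw [← Ring.lie_def, eq_combination hf, eq_combination hg]
  simp only [map_add, map_smul, LinearMap.add_apply, LinearMap.smul_apply, add_lie, lie_add,
    smul_lie, lie_smul, lie_self, hEE, hGG, hα, hβ, hβ', hγ, hγ', hδ, hε, lie_HE, lie_EH, lie_HG,
    lie_GH, lie_EG, lie_GE]
  module

end SlTwo

/-- Every `sl(V)`-invariant bilinear map `B : sl(V) × sl(V) → sl(V)` is a scalar
multiple of the Lie bracket. -/
theorem sl2_invariant_bilinear_sl_sl_to_sl
    (F V : Type*) [Field F] [AddCommGroup V] [Module F V] [FiniteDimensional F V]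
    (h2 : (2 : F) ≠ 0) (h3 : (3 : F) ≠ 0)
    (hdim : Module.finrank F V = 2)
    (B : Module.End F V →ₗ[F] Module.End F V →ₗ[F] Module.End F V)
    (hB0 : ∀ f g : Module.End F V, LinearMap.trace F V f = 0 →
      LinearMap.trace F V g = 0 → LinearMap.trace F V (B f g) = 0)
    (hinv : ∀ x f g : Module.End F V, LinearMap.trace F V x = 0 →
      LinearMap.trace F V f = 0 → LinearMap.trace F V g = 0 →
      ⁅x, B f g⁆ = B ⁅x, f⁆ g + B f ⁅x, g⁆) :
    ∃ c : F, ∀ f g : Module.End F V, LinearMap.trace F V f = 0 →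
      LinearMap.trace F V g = 0 → B f g = c • (f * g - g * f) := by
  let b := Module.finBasisOfFinrankEq F V hdim
  let φ : Module.End F V ≃ₐ[F] Matrix (Fin 2) (Fin 2) F := LinearMap.toMatrixAlgEquiv b
  have htr (f : Module.End F V) : (φ f).trace = LinearMap.trace F V f :=
    (LinearMap.trace_eq_matrix_trace F b f).symm
  have htr' (M : Matrix (Fin 2) (Fin 2) F) : LinearMap.trace F V (φ.symm M) = M.trace := by
    rw [← htr, φ.apply_symm_apply]
  have hlie (x y : Module.End F V) : φ ⁅x, y⁆ = ⁅φ x, φ y⁆ := by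
    simp only [Ring.lie_def, map_sub, map_mul]
  have hlie' (x y : Matrix (Fin 2) (Fin 2) F) : φ.symm ⁅x, y⁆ = ⁅φ.symm x, φ.symm y⁆ := by
    simp only [Ring.lie_def, map_sub, map_mul]
  obtain ⟨c, hc⟩ := SlTwo.matrix_case h2 h3
    ((B.compl₁₂ φ.symm.toLinearMap φ.symm.toLinearMap).compr₂ φ.toLinearMap)
    (fun f g hf hg => by
      simpa [htr] using hB0 (φ.symm f) (φ.symm g) (by rwa [htr']) (by rwa [htr']))
    (fun x f g hx hf hg => by
      have h := congrArg φ (hinv (φ.symm x) (φ.symm f) (φ.symm g)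
        (by rwa [htr']) (by rwa [htr']) (by rwa [htr']))
      simp only [hlie, map_add, φ.apply_symm_apply, ← hlie'] at h
      exact h)
  refine ⟨c, fun f g hf hg => φ.injective ?_⟩
  simpa using hc (φ f) (φ g) (by rwa [htr]) (by rwa [htr])
end

section
/- Every sl(V)-invariant bilinear form B : sl(V) × sl(V) → F is a scalar multiple of the trace form: there exists c ∈ F such that B(f,g) = c · trace(f ∘ g) for all f, g ∈ sl(V). -/
/-!
Fix a basis of `V` and let `e, f, h` be the standard `sl₂`-triple in the resulting matrix algebra;
it spans `sl(V)`, so both forms are determined by their nine values on it. Invariance under `h`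
says that `B` pairs weight spaces nontrivially only when the weights are opposite, so (as `2 ≠ 0`)
only `B(e,f)`, `B(f,e)`, `B(h,h)` can be nonzero. Invariance under `e` and `f` gives
`B(h,h) = 2 B(f,e) = 2 B(e,f)`. The trace form takes the values `1, 1, 2` there, so `B` is
`B(e,f)` times the trace form.
-/

theorem sl2_invariant_bilinear_form_sl_sl
    (F V : Type*) [Field F] [AddCommGroup V] [Module F V] [FiniteDimensional F V]
    (h2 : (2 : F) ≠ 0) (h3 : (3 : F) ≠ 0)
    (hdim : Module.finrank F V = 2)
    (B : Module.End F V →ₗ[F] Module.End F V →ₗ[F] F)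
    (hinv : ∀ x f g : Module.End F V, LinearMap.trace F V x = 0 →
      LinearMap.trace F V f = 0 → LinearMap.trace F V g = 0 →
      B ⁅x, f⁆ g + B f ⁅x, g⁆ = 0) :
    ∃ c : F, ∀ f g : Module.End F V, LinearMap.trace F V f = 0 →
      LinearMap.trace F V g = 0 → B f g = c * LinearMap.trace F V (f * g) := by
  let b := Module.finBasisOfFinrankEq F V hdim
  let φ : Matrix (Fin 2) (Fin 2) F ≃ₐ[F] Module.End F V := Matrix.toLinAlgEquiv b
  have htr (M : Matrix (Fin 2) (Fin 2) F) : LinearMap.trace F V (φ M) = M 0 0 + M 1 1 := by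
    have h := LinearMap.trace_eq_matrix_trace F b (φ M)
    rw [h, ← Matrix.trace_fin_two]
    exact congrArg _ (LinearMap.toMatrixAlgEquiv_toLinAlgEquiv b M)
  let e : Matrix (Fin 2) (Fin 2) F := !![0, 1; 0, 0]
  let f : Matrix (Fin 2) (Fin 2) F := !![0, 0; 1, 0]
  let h : Matrix (Fin 2) (Fin 2) F := !![1, 0; 0, -1]
  have te : LinearMap.trace F V (φ e) = 0 := by simp [htr, e]
  have tf : LinearMap.trace F V (φ f) = 0 := by simp [htr, f]
  have th : LinearMap.trace F V (φ h) = 0 := by simp [htr, h]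
  have br (X Y Z : Matrix (Fin 2) (Fin 2) F) (hZ : X * Y - Y * X = Z) :
      ⁅φ X, φ Y⁆ = φ Z := by
    rw [← hZ, Ring.lie_def, map_sub, map_mul, map_mul]
  have hhe : ⁅φ h, φ e⁆ = (2 : F) • φ e := by
    rw [← map_smul]; apply br; ext i j; fin_cases i <;> fin_cases j <;> simp [h, e]; norm_num
  have hhf : ⁅φ h, φ f⁆ = (-2 : F) • φ f := by
    rw [← map_smul]; apply br; ext i j; fin_cases i <;> fin_cases j <;> simp [h, f]; norm_num
  have hef : ⁅φ e, φ f⁆ = φ h := by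
    apply br; ext i j; fin_cases i <;> fin_cases j <;> simp [h, e, f]
  have heh : ⁅φ e, φ h⁆ = (-2 : F) • φ e := by
    rw [neg_smul, ← hhe, Ring.lie_def, Ring.lie_def, neg_sub]
  have hfh : ⁅φ f, φ h⁆ = (2 : F) • φ f := by
    rw [← neg_neg (2 : F), neg_smul, ← hhf, Ring.lie_def, Ring.lie_def, neg_sub]
  have hfe : ⁅φ f, φ e⁆ = -φ h := by
    rw [← hef, Ring.lie_def, Ring.lie_def, neg_sub]
  have hhh : ⁅φ h, φ h⁆ = 0 := by rw [Ring.lie_def, sub_self]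
  have i1 := hinv _ _ _ th te te
  have i2 := hinv _ _ _ th tf tf
  have i3 := hinv _ _ _ th th te
  have i4 := hinv _ _ _ th te th
  have i5 := hinv _ _ _ th th tf
  have i6 := hinv _ _ _ th tf th
  have i7 := hinv _ _ _ te tf th
  have i8 := hinv _ _ _ tf te th
  simp only [hhe, hhf, hef, heh, hfh, hfe, hhh, map_smul, map_neg, map_zero,
    LinearMap.smul_apply, LinearMap.neg_apply, LinearMap.zero_apply, smul_eq_mul,
    zero_add, add_zero] at i1 i2 i3 i4 i5 i6 i7 i8
  have bee : B (φ e) (φ e) = 0 :=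
    mul_left_cancel₀ h2 (mul_left_cancel₀ h2 (by linear_combination i1))
  have bff : B (φ f) (φ f) = 0 :=
    mul_left_cancel₀ h2 (mul_left_cancel₀ h2 (by linear_combination -i2))
  have bhe : B (φ h) (φ e) = 0 := mul_left_cancel₀ h2 (by linear_combination i3)
  have beh : B (φ e) (φ h) = 0 := mul_left_cancel₀ h2 (by linear_combination i4)
  have bhf : B (φ h) (φ f) = 0 := mul_left_cancel₀ h2 (by linear_combination -i5)
  have bfh : B (φ f) (φ h) = 0 := mul_left_cancel₀ h2 (by linear_combination -i6)
  have bhh : B (φ h) (φ h) = 2 * B (φ e) (φ f) := by linear_combination -i8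
  have bfe : B (φ f) (φ e) = B (φ e) (φ f) :=
    mul_left_cancel₀ h2 (by linear_combination -i7 - i8)
  have dec (M : Matrix (Fin 2) (Fin 2) F) (hM : LinearMap.trace F V (φ M) = 0) :
      φ M = M 0 1 • φ e + M 1 0 • φ f + M 0 0 • φ h := by
    rw [htr] at hM
    simp only [← map_smul, ← map_add]
    congr 1
    ext i j
    fin_cases i <;> fin_cases j <;> simp [h, e, f]
    linear_combination hM
  refine ⟨B (φ e) (φ f), fun x y hx hy => ?_⟩
  obtain ⟨M, rfl⟩ := φ.surjective x
  obtain ⟨N, rfl⟩ := φ.surjective y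
  rw [← map_mul, htr, dec M hx, dec N hy]
  rw [htr] at hx hy
  simp only [map_add, map_smul, LinearMap.add_apply, LinearMap.smul_apply, smul_eq_mul,
    bee, bff, bhe, beh, bhf, bfh, bhh, bfe, Matrix.mul_apply, Fin.sum_univ_two]
  rw [eq_neg_of_add_eq_zero_right hx, eq_neg_of_add_eq_zero_right hy]
  ring
end

section
/- Every sl(V)-invariant bilinear map B : sl(V) × V → V is a scalar multiple of the natural action: there exists c ∈ F such that B(f, v) = c • f(v) for all f ∈ sl(V) and v ∈ V. -/
/-!
Fix a basis `b 0, b 1` of `V` and the corresponding standard triple `e, h, f` of `sl(V)`.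
Invariance under `h` says that `B h (b 0)` has weight `1`, so `B h (b 0) = c • b 0` for some `c`
(here `2 ≠ 0` is needed). Acting by `e` and then repeatedly by `f` on this identity determines all
other values of `B` on the triple and the basis: they agree with `c` times the natural action.
Since `e, h, f` span the trace-zero endomorphisms, the claim follows by bilinearity.
-/

/-- The trace of an endomorphism of a plane as the sum of its two diagonal entries. -/
theorem trace_eq_diag_sum {F V : Type*} [Field F] [AddCommGroup V] [Module F V]
    (b : Module.Basis (Fin 2) F V) (g : Module.End F V) :
    LinearMap.trace F V g = b.repr (g (b 0)) 0 + b.repr (g (b 1)) 1 := by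
  rw [LinearMap.trace_eq_matrix_trace F b, Matrix.trace_fin_two]
  simp [LinearMap.toMatrix_apply]

/-- Every `sl(V)`-invariant bilinear map `B : sl(V) × V → V` is a scalar
multiple of the natural action. -/
theorem sl2_invariant_bilinear_sl_V_to_V
    (F V : Type*) [Field F] [AddCommGroup V] [Module F V] [FiniteDimensional F V]
    (h2 : (2 : F) ≠ 0) (h3 : (3 : F) ≠ 0)
    (hdim : Module.finrank F V = 2)
    (B : Module.End F V →ₗ[F] V →ₗ[F] V)
    (hinv : ∀ x f : Module.End F V, LinearMap.trace F V x = 0 →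
      LinearMap.trace F V f = 0 → ∀ v : V,
      x (B f v) = B ⁅x, f⁆ v + B f (x v)) :
    ∃ c : F, ∀ (f : Module.End F V) (v : V), LinearMap.trace F V f = 0 →
      B f v = c • f v := by
  let b : Module.Basis (Fin 2) F V := Module.finBasisOfFinrankEq F V hdim
  obtain ⟨e, e0, e1⟩ : ∃ e : Module.End F V, e (b 0) = 0 ∧ e (b 1) = b 0 :=
    ⟨b.constr F ![0, b 0], by simp,
      by simp⟩
  obtain ⟨f, f0, f1⟩ : ∃ f : Module.End F V, f (b 0) = b 1 ∧ f (b 1) = 0 :=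
    ⟨b.constr F ![b 1, 0], by simp,
      by simp⟩
  obtain ⟨h, h0, h1⟩ : ∃ h : Module.End F V, h (b 0) = b 0 ∧ h (b 1) = -b 1 :=
    ⟨b.constr F ![b 0, -b 1], by simp,
      by simp⟩
  have te : LinearMap.trace F V e = 0 := by simp [trace_eq_diag_sum b, e0, e1]
  have tf : LinearMap.trace F V f = 0 := by simp [trace_eq_diag_sum b, f0, f1]
  have th : LinearMap.trace F V h = 0 := by simp [trace_eq_diag_sum b, h0, h1]
  have leh : ⁅e, h⁆ = -((2 : F) • e) := by
    refine b.ext fun i => ?_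
    fin_cases i
    · simp [Ring.lie_def, e0, h0]
    · simp [Ring.lie_def, e1, h0, h1, two_smul]; abel
  have lfh : ⁅f, h⁆ = (2 : F) • f := by
    refine b.ext fun i => ?_
    fin_cases i
    · simp [Ring.lie_def, f0, h0, h1, two_smul]
    · simp [Ring.lie_def, f1, h1]
  have lfe : ⁅f, e⁆ = -h := by
    refine b.ext fun i => ?_
    fin_cases i
    · simp [Ring.lie_def, e0, f0, e1, h0]
    · simp [Ring.lie_def, e1, f0, f1, h1]
  have dec (v : V) : v = b.repr v 0 • b 0 + b.repr v 1 • b 1 := by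
    conv_lhs => rw [← b.sum_repr v, Fin.sum_univ_two]
  have two_inj {v w : V} (hv : (2 : F) • v = (2 : F) • w) : v = w := smul_right_injective V h2 hv
  obtain ⟨c, hh0⟩ : ∃ c : F, B h (b 0) = c • b 0 := by
    refine ⟨b.repr (B h (b 0)) 0, ?_⟩
    have k := hinv h h th th (b 0)
    rw [Ring.lie_def, sub_self, B.map_zero, LinearMap.zero_apply, zero_add, h0] at k
    -- Comparing `b 1`-coordinates, the coordinate `y` of `B h (b 0)` satisfies `-y = y`.
    have k1 : b.repr (h (B h (b 0))) 1 = b.repr (B h (b 0)) 1 := by rw [k]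
    rw [dec (B h (b 0))] at k1
    simp [h0, h1] at k1
    have k2 : b.repr (B h (b 0)) 1 = 0 := by
      have : (2 : F) * b.repr (B h (b 0)) 1 = 0 := by linear_combination -k1
      exact (mul_eq_zero.mp this).resolve_left h2
    conv_lhs => rw [dec (B h (b 0)), k2, zero_smul, add_zero]
  have he0 : B e (b 0) = 0 := by
    have k := hinv e h te th (b 0)
    rw [leh, hh0] at k
    simp [e0] at k
    exact k.resolve_left h2
  have he1 : B e (b 1) = c • b 0 := by
    have k := hinv f e tf te (b 0)
    rw [lfe, he0, f0] at k
    simp [hh0] at k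
    linear_combination (norm := module) -k
  have hh1 : B h (b 1) = -(c • b 1) := by
    have k := hinv f e tf te (b 1)
    rw [lfe, he1, f1] at k
    simp [f0] at k
    rw [k, neg_neg]
  have hf0 : B f (b 0) = c • b 1 := by
    have k := hinv f h tf th (b 0)
    rw [lfh, hh0, f0, hh1] at k
    simp [f0] at k
    apply two_inj
    linear_combination (norm := module) -k
  have hf1 : B f (b 1) = 0 := by
    have k := hinv f f tf tf (b 0)
    rw [Ring.lie_def, sub_self, B.map_zero, LinearMap.zero_apply, zero_add, hf0, f0] at k
    simpa [f1] using k.symm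
  refine ⟨c, fun g v tg => ?_⟩
  obtain ⟨p, q, r, rfl⟩ : ∃ p q r : F, g = p • h + q • e + r • f := by
    refine ⟨b.repr (g (b 0)) 0, b.repr (g (b 1)) 0, b.repr (g (b 0)) 1, b.ext fun i => ?_⟩
    rw [trace_eq_diag_sum b] at tg
    fin_cases i
    · simpa [h0, e0, f0] using dec (g (b 0))
    · have k := dec (g (b 1))
      rw [eq_neg_of_add_eq_zero_right tg] at k
      simp only [Fin.mk_one, LinearMap.add_apply, LinearMap.smul_apply, h1, e1, f1]
      rw [k]
      simp
      abel
  rw [dec v]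
  simp only [map_add, map_smul, LinearMap.add_apply, LinearMap.smul_apply, hh0, hh1, he0, he1, hf0,
    hf1, h0, h1, e0, e1, f0, f1]
  module
end

section
/- For all u, v ∈ V the endomorphism γ_{u,v} of V, defined by γ_{u,v}(w) = ω(u,w) v + ω(v,w) u, has trace zero, and every sl(V)-invariant bilinear map B : V × V → sl(V) is a scalar multiple of γ: there exists c ∈ F such that B(u,v) = c • γ_{u,v} for all u, v ∈ V. -/
/-!
In a basis `e, f` of `V`, let `E, F, H` be the standard basis of `sl(V)`. Invariance under `H` says
that `B` preserves weights, and the weights `2, 0, -2` of `sl(V)` are distinct because `2 ≠ 0`; so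
`B(e,e) = a E`, while `B(e,f)` and `B(f,e)` are multiples of `H` and `B(f,f)` is a multiple of `F`.
Invariance under `E` and `F` then determines all these multiples from `a`, so the space of invariant
maps is at most one-dimensional, and `γ` is a nonzero element of it. The computation is carried out
on matrix entries in `sl2_matrix_solution`.
-/

/-- The endomorphism `γ_{u,v}` of `V` given by `w ↦ ω(u,w) • v + ω(v,w) • u`. -/
def gammaMap {F V : Type*} [Field F] [AddCommGroup V] [Module F V]
    (ω : V →ₗ[F] V →ₗ[F] F) (u v : V) : Module.End F V :=
  (ω u).smulRight v + (ω v).smulRight u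

/-- The coordinate form of the theorem: `M i j` is the matrix of `B (b i) (b j)`, and `w` is the
value `ω (b 0) (b 1)`. The hypothesis `h` is invariance under the endomorphism with matrix `X`, and
the conclusion expresses `M i j` as a multiple of the matrix of `γ (b i) (b j)`. -/
theorem sl2_matrix_solution {F : Type*} [Field F] (h2 : (2 : F) ≠ 0) (w : F) (hw : w ≠ 0)
    (M : Fin 2 → Fin 2 → Matrix (Fin 2) (Fin 2) F)
    (h0 : ∀ i j, (M i j).trace = 0)
    (h : ∀ X : Matrix (Fin 2) (Fin 2) F, X.trace = 0 → ∀ i j,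
      X * M i j - M i j * X = ∑ k, X k i • M k j + ∑ k, X k j • M i k) :
    ∃ c : F, ∀ i j k l, M i j l k =
      c * (!![0, w; -w, 0] i k * (if l = j then 1 else 0) +
        !![0, w; -w, 0] j k * (if l = i then 1 else 0)) := by
  have hE := h !![0, 1; 0, 0] (by simp [Matrix.trace_fin_two])
  have hF := h !![0, 0; 1, 0] (by simp [Matrix.trace_fin_two])
  have hH := h !![1, 0; 0, -1] (by simp [Matrix.trace_fin_two])
  simp only [← Matrix.ext_iff, Fin.forall_fin_two, Matrix.trace_fin_two, Fin.sum_univ_two,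
    Matrix.sub_apply, Matrix.add_apply, Matrix.smul_apply, Matrix.mul_apply, smul_eq_mul,
    Matrix.of_apply, Matrix.cons_val', Matrix.cons_val_zero, Matrix.cons_val_one,
    Matrix.cons_val_fin_one] at hE hF hH h0
  -- `γ (b 0) (b 0) = 2 * w * E`, which forces the scalar.
  refine ⟨M 0 0 0 1 / (2 * w), ?_⟩
  simp only [Fin.forall_fin_two, Matrix.of_apply, Matrix.cons_val', Matrix.cons_val_zero,
    Matrix.cons_val_one, Matrix.cons_val_fin_one]
  norm_num
  field_simp
  grind

/-- Each `γ_{u,v}` has trace zero, and every `sl(V)`-invariant bilinear map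
`B : V × V → sl(V)` is a scalar multiple of `γ`. -/
theorem sl2_invariant_bilinear_V_V_to_sl
    (F V : Type*) [Field F] [AddCommGroup V] [Module F V] [FiniteDimensional F V]
    (h2 : (2 : F) ≠ 0) (h3 : (3 : F) ≠ 0)
    (hdim : Module.finrank F V = 2)
    (ω : V →ₗ[F] V →ₗ[F] F) (hω0 : ω ≠ 0) (hωalt : ∀ v : V, ω v v = 0)
    (B : V →ₗ[F] V →ₗ[F] Module.End F V)
    (hB0 : ∀ u v : V, LinearMap.trace F V (B u v) = 0)
    (hinv : ∀ x : Module.End F V, LinearMap.trace F V x = 0 →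
      ∀ u v : V, ⁅x, B u v⁆ = B (x u) v + B u (x v)) :
    (∀ u v : V, LinearMap.trace F V (gammaMap ω u v) = 0) ∧
    ∃ c : F, ∀ u v : V, B u v = c • gammaMap ω u v := by
  have hneg : ∀ u v, ω v u = -ω u v := fun u v => by
    have := hωalt (u + v)
    simp only [map_add, LinearMap.add_apply, hωalt] at this
    linear_combination this
  refine ⟨fun u v => by simp [gammaMap, hneg u v], ?_⟩
  let b := Module.finBasisOfFinrankEq F V hdim
  have hw : ω (b 0) (b 1) ≠ 0 := fun hw => hω0 <| b.ext fun i => b.ext fun j => by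
    fin_cases i <;> fin_cases j <;> simp [hωalt, hw, hneg (b 0) (b 1)]
  have hW : ∀ i j, ω (b i) (b j) = !![0, ω (b 0) (b 1); -ω (b 0) (b 1), 0] i j := fun i j => by
    fin_cases i <;> fin_cases j <;> simp [hωalt, hneg (b 0) (b 1)]
  obtain ⟨c, hc⟩ := sl2_matrix_solution h2 _ hw (fun i j => LinearMap.toMatrix b b (B (b i) (b j)))
    (fun i j => by rw [← LinearMap.trace_eq_matrix_trace F b]; exact hB0 _ _)
    (fun X hX i j => by
      have hx := hinv (Matrix.toLin b b X)
        (by rw [LinearMap.trace_eq_matrix_trace F b, LinearMap.toMatrix_toLin, hX]) (b i) (b j)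
      have := congrArg (LinearMap.toMatrix b b) hx
      simpa [Ring.lie_def, LinearMap.toMatrix_mul, Matrix.toLin_self] using this)
  -- Both sides are bilinear, so it suffices to compare them on the basis.
  let G : V →ₗ[F] V →ₗ[F] Module.End F V := LinearMap.mk₂ F (gammaMap ω)
    (fun _ _ _ => by ext; simp [gammaMap]; module) (fun _ _ _ => by ext; simp [gammaMap]; module)
    (fun _ _ _ => by ext; simp [gammaMap]; module) (fun _ _ _ => by ext; simp [gammaMap]; module)
  refine ⟨c, fun u v => ?_⟩
  suffices hBG : B = c • G by rw [hBG]; rfl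
  refine b.ext fun i => b.ext fun j => (LinearMap.toMatrix b b).injective ?_
  ext l k
  rw [hc i j k l, ← hW, ← hW]
  simp [G, gammaMap, LinearMap.toMatrix_apply, Finsupp.single_apply, eq_comm]
  split_ifs <;> ring
end

section
/- Let e ∈ J be an idempotent (e∘e = e). If a ∈ J satisfies e∘a = a (a lies in the Peirce 1-space of e) and b ∈ J satisfies e∘b = 0 (b lies in the Peirce 0-space of e), then the multiplication operators by a and b commute: a∘(b∘c) = b∘(a∘c) for all c ∈ J. -/
/-!
Write `L x` for multiplication by `x`. Polarizing the Jordan identity (characteristic `≠ 2`) gives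
`[L (y∘z), L x] + [L (x∘z), L y] + [L (x∘y), L z] = 0`. Taking two of the arguments equal to `e`
shows that `L e` commutes with both `L a` and `L b`. Hence `e ∘ (a ∘ b)` equals both
`(e ∘ a) ∘ b = a ∘ b` and `a ∘ (e ∘ b) = 0`, so `a ∘ b = 0`. The arguments `e, a, b` then
leave only `[L a, L b] = 0`.
-/

/-- The full polarization of the Jordan identity, written as
`[L (y∘z), L x] + [L (x∘z), L y] + [L (x∘y), L z] = 0` applied to `c`. -/
theorem jordan_polarized
    {F J : Type*} [Field F] (h2 : (2 : F) ≠ 0) [AddCommGroup J] [Module F J]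
    (mul : J →ₗ[F] J →ₗ[F] J)
    (hcomm : ∀ x y : J, mul x y = mul y x)
    (hJordan : ∀ x y : J, mul (mul x y) (mul x x) = mul x (mul y (mul x x)))
    (x y z c : J) :
    (mul (mul y z) (mul x c) - mul x (mul (mul y z) c))
      + (mul (mul x z) (mul y c) - mul y (mul (mul x z) c))
      + (mul (mul x y) (mul z c) - mul z (mul (mul x y) c)) = 0 := by
  have hJ : ∀ u : J, mul (mul u u) (mul u c) = mul u (mul (mul u u) c) := fun u => by
    rw [hcomm (mul u u), hJordan, hcomm c]
  have hxyz := hJ (x + y + z)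
  have hxy := hJ (x + y)
  have hxz := hJ (x + z)
  have hyz := hJ (y + z)
  have hx := hJ x
  have hy := hJ y
  have hz := hJ z
  simp only [map_add, LinearMap.add_apply, hcomm y x, hcomm z x, hcomm z y]
    at hxyz hxy hxz hyz
  refine (smul_eq_zero_iff_right h2).mp ?_
  -- Inclusion–exclusion isolates the part of the cubic identity linear in each of `x`, `y`, `z`.
  linear_combination (norm := module) hxyz - hxy - hxz - hyz + hx + hy + hz

/-- In a commutative Jordan algebra, if `e` is an idempotent, `a` lies in the
Peirce 1-space of `e` and `b` lies in the Peirce 0-space of `e`, then the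
multiplication operators by `a` and `b` commute. -/
theorem peirce_one_zero_mul_commute
    (F J : Type*) [Field F] (h2 : (2 : F) ≠ 0) (h3 : (3 : F) ≠ 0)
    [AddCommGroup J] [Module F J]
    (mul : J →ₗ[F] J →ₗ[F] J)
    (hcomm : ∀ x y : J, mul x y = mul y x)
    (hJordan : ∀ x y : J, mul (mul x y) (mul x x) = mul x (mul y (mul x x)))
    (e : J) (he : mul e e = e)
    (a : J) (ha : mul e a = a)
    (b : J) (hb : mul e b = 0) :
    ∀ c : J, mul a (mul b c) = mul b (mul a c) := by
  intro c
  have hP := jordan_polarized h2 mul hcomm hJordan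
  have hea : mul e (mul a b) = mul a (mul e b) := by
    have h := hP e e a b
    simp only [he, ha] at h
    linear_combination (norm := module) -h
  have heb : mul e (mul b a) = mul b (mul e a) := by
    have h := hP e e b a
    simp only [he, hb, map_zero, LinearMap.zero_apply] at h
    linear_combination (norm := module) h
  have hab : mul a b = 0 := by
    rw [hb, map_zero] at hea
    rw [ha, hcomm b a, hea] at heb
    exact heb.symm
  have h := hP e a b c
  simp only [ha, hb, hab, map_zero, LinearMap.zero_apply] at h
  linear_combination (norm := module) h
end

section
/- Let e ∈ J be an idempotent (e∘e = e). If a ∈ J satisfies e∘a = a (a lies in the Peirce 1-space of e), then the multiplication operators by e and a commute: e∘(a∘c) = a∘(e∘c) for all c ∈ J. -/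
/-!
Write `L_x` for multiplication by `x`. The Jordan identity says `[L_x, L_{x ∘ x}] = 0` for all `x`.
Its linearization at `x = e` in the direction `a` reads
`[L_a, L_{e ∘ e}] + 2 [L_e, L_{e ∘ a}] = 0`, which becomes `[L_e, L_a] = 0` when `e ∘ e = e` and
`e ∘ a = a`. The linear part is isolated by comparing `x = e + a` with `x = e - a` and removing the
cubic part `[L_a, L_{a ∘ a}] = 0`; only division by `2` is required.
-/

/-- In a commutative Jordan algebra, if `e` is an idempotent and `a` lies in the
Peirce 1-space of `e`, then the multiplication operators by `e` and `a` commute. -/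
theorem peirce_one_mul_commutes_with_idempotent
    (F J : Type*) [Field F] (h2 : (2 : F) ≠ 0) (h3 : (3 : F) ≠ 0)
    [AddCommGroup J] [Module F J]
    (mul : J →ₗ[F] J →ₗ[F] J)
    (hcomm : ∀ x y : J, mul x y = mul y x)
    (hJordan : ∀ x y : J, mul (mul x y) (mul x x) = mul x (mul y (mul x x)))
    (e : J) (he : mul e e = e)
    (a : J) (ha : mul e a = a) :
    ∀ c : J, mul e (mul a c) = mul a (mul e c) := by
  intro c
  have hp : ∀ x : J, mul (mul x x) (mul x c) = mul x (mul (mul x x) c) := fun x => by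
    rw [hcomm (mul x x) (mul x c), hJordan, hcomm c]
  have hae : mul a e = a := by rw [hcomm, ha]
  have h₁ := hp (e + a)
  have h₂ := hp (e - a)
  have h₃ := hp a
  simp only [map_add, map_sub, LinearMap.add_apply, LinearMap.sub_apply, he, ha, hae] at h₁ h₂ h₃
  -- Half the difference of `h₁` and `h₂` is `[L_a, L_e] + 2 [L_e, L_a] + [L_a, L_{a ∘ a}] = 0`,
  -- and `h₃` removes the last bracket.
  have key : (2 : F) • (mul e (mul a c) - mul a (mul e c)) = 0 := by
    rw [two_smul]
    generalize mul a a = b at *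
    rw [← sub_eq_zero] at h₁ h₂ h₃
    have h := congrArg₂ (fun u v => u - v) h₁ h₂
    have h' := congrArg (fun u => u + u) h₃
    have h'' := congrArg₂ (fun u v => u - v) h h'
    simp only [sub_zero, add_zero] at h''
    rw [← neg_eq_zero, ← h'']
    abel
  exact sub_eq_zero.mp ((smul_eq_zero.mp key).resolve_left h2)
end

section
/- The eigenspace 𝔤₂ is closed under the product A∘B = ½⁅⁅A,f⁆,B⁆ and, with this product, is a unital Jordan algebra with unit e: for all A, B ∈ 𝔤₂ one has A∘B ∈ 𝔤₂, A∘B = B∘A, e∘A = A = A∘e, and the Jordan identity ((A∘A)∘B)∘A = (A∘A)∘(B∘A). -/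
/-!
The Jordan identity comes from the Jordan pair structure on `(𝔤₂, 𝔤₋₂)`. Since `±4` are not
weights, `𝔤₂` is abelian (which gives commutativity of `∘`) and `(ad f)³` kills `𝔤₂`. For
`A, B ∈ 𝔤₂` put `z = ⁅⁅B, f⁆, f⁆ ∈ 𝔤₋₂` and `Q B = ⁅⁅A, z⁆, A⁆`. Three facts carry the proof:

* `Q B = 4 (A∘A)∘B - 8 A∘(A∘B)`, a multiple of the usual quadratic operator `U_A`;
* `⁅⁅A, f⁆, z⁆ = -2 ⁅⁅A∘B, f⁆, f⁆`, so that `ad ⁅A, f⁆` transports `z` for `B` to a multiple of `z`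
  for `A∘B`;
* expanding `⁅⁅A, f⁆, ⁅⁅A, z⁆, A⁆⁆` and `⁅⁅A, z⁆, ⁅⁅A, f⁆, A⁆⁆` by the Jacobi identity gives two
  linear relations between these brackets and `Q (A∘B)`, whose solution is `A∘(Q B) = Q (A∘B)`.

Substituting the first fact in the last equation leaves exactly the Jordan identity. The element
`e` is a unit because `⁅e, f⁆ = h` acts as `2` on `𝔤₂`.
-/

/-- The Jordan product `A∘B = ½⁅⁅A,f⁆,B⁆` on the eigenspace `𝔤₂`. -/
def jordanMul (k : Type*) {g : Type*} [Field k] [LieRing g] [LieAlgebra k g]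
    (f A B : g) : g := (2 : k)⁻¹ • ⁅⁅A, f⁆, B⁆

section Aux

variable {k g : Type*} [Field k] [LieRing g] [LieAlgebra k g]

theorem weight_lie {H x y : g} {a b c : k} (hx : ⁅H, x⁆ = a • x) (hy : ⁅H, y⁆ = b • y)
    (hc : a + b = c) : ⁅H, ⁅x, y⁆⁆ = c • ⁅x, y⁆ := by
  rw [leibniz_lie, hx, hy, smul_lie, lie_smul, ← hc, add_smul]

/-- A scalar outside `{-2, -1, 0, 1, 2}` is not a weight: the product of the operators
`ad H - i` over these five values `i` annihilates the whole algebra. -/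
theorem eq_zero_of_weight {H : g}
    (hgrade : ∀ x : g, ∃ a b c d e' : g,
      ⁅H, a⁆ = (-2 : k) • a ∧ ⁅H, b⁆ = (-1 : k) • b ∧ ⁅H, c⁆ = 0 ∧
      ⁅H, d⁆ = (1 : k) • d ∧ ⁅H, e'⁆ = (2 : k) • e' ∧ x = a + b + c + d + e')
    {x : g} {t : k} (hx : ⁅H, x⁆ = t • x)
    (ht : (t + 2) * (t + 1) * t * (t - 1) * (t - 2) ≠ 0) : x = 0 := by
  obtain ⟨a, b, c, d, e, ha, hb, hc, hd, he, hsum⟩ := hgrade x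
  have step : ∀ p q r s u : k, ⁅H, p • a + q • b + r • c + s • d + u • e⁆
      = (-2 * p) • a + (-q) • b + s • d + (2 * u) • e := by
    intro p q r s u
    simp only [lie_add, lie_smul, ha, hb, hc, hd, he]
    module
  -- `ad H` multiplies `x` by `t`, and each component by its own weight.
  have next : ∀ w p q r s u : k,
      w • x = p • a + q • b + r • c + s • d + u • e →
      (w * t) • x = (-2 * p) • a + (-q) • b + (0 : k) • c + s • d + (2 * u) • e := by
    intro w p q r s u hw
    have h := step p q r s u
    rw [← hw, lie_smul, hx, smul_smul] at h
    rw [h]; module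
  have h0 : (1 : k) • x
      = (1 : k) • a + (1 : k) • b + (1 : k) • c + (1 : k) • d + (1 : k) • e := by
    rw [hsum]; module
  have h1 := next _ _ _ _ _ _ h0
  have h2 := next _ _ _ _ _ _ h1
  have h3 := next _ _ _ _ _ _ h2
  have h4 := next _ _ _ _ _ _ h3
  have h5 := next _ _ _ _ _ _ h4
  -- The coefficients are those of `T (T² - 1) (T² - 4) = T⁵ - 5 T³ + 4 T`.
  have key : ((t + 2) * (t + 1) * t * (t - 1) * (t - 2)) • x = 0 := by
    linear_combination (norm := module) h5 - (5 : k) • h3 + (4 : k) • h1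
  exact (smul_eq_zero.mp key).resolve_left ht

/-- The Jordan identity, from commutativity of `∘` and the vanishing of the brackets of weight
`±4`. -/
theorem jordan_identity [CharZero k] {H F : g} (hF : ⁅H, F⁆ = (-2 : k) • F)
    (hpos : ∀ x : g, ⁅H, x⁆ = (4 : k) • x → x = 0)
    (hneg : ∀ x : g, ⁅H, x⁆ = (-4 : k) • x → x = 0)
    (J : g → g → g) (hJ : ∀ P Q, ⁅⁅P, F⁆, Q⁆ = (2 : k) • J P Q)
    (hJw : ∀ P Q, ⁅H, P⁆ = (2 : k) • P → ⁅H, Q⁆ = (2 : k) • Q → ⁅H, J P Q⁆ = (2 : k) • J P Q)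
    (hJc : ∀ P Q, ⁅H, P⁆ = (2 : k) • P → ⁅H, Q⁆ = (2 : k) • Q → J P Q = J Q P)
    {A B : g} (hA : ⁅H, A⁆ = (2 : k) • A) (hB : ⁅H, B⁆ = (2 : k) • B) :
    J A (J (J A A) B) = J (J A A) (J A B) := by
  have hAA := hJw A A hA hA
  have hAB := hJw A B hA hB
  have abel2 : ∀ P Q : g, ⁅H, P⁆ = (2 : k) • P → ⁅H, Q⁆ = (2 : k) • Q → ⁅P, Q⁆ = 0 :=
    fun P Q hP hQ => hpos _ (weight_lie hP hQ (by norm_num))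
  have hw0 : ∀ P : g, ⁅H, P⁆ = (2 : k) • P → ⁅H, ⁅P, F⁆⁆ = (0 : k) • ⁅P, F⁆ :=
    fun P hP => weight_lie hP hF (by norm_num)
  have hwm : ∀ P : g, ⁅H, P⁆ = (2 : k) • P → ⁅H, ⁅⁅P, F⁆, F⁆⁆ = (-2 : k) • ⁅⁅P, F⁆, F⁆ :=
    fun P hP => weight_lie (hw0 P hP) hF (by norm_num)
  have cube : ∀ P : g, ⁅H, P⁆ = (2 : k) • P → ⁅⁅⁅P, F⁆, F⁆, F⁆ = 0 :=
    fun P hP => hneg _ (weight_lie (hwm P hP) hF (by norm_num))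
  have Qform : ∀ C, ⁅H, C⁆ = (2 : k) • C →
      ⁅⁅A, ⁅⁅C, F⁆, F⁆⁆, A⁆ = (4 : k) • J (J A A) C - (8 : k) • J A (J A C) := by
    intro C hC
    have hAC := hJw A C hA hC
    have e1 : ⁅A, ⁅⁅C, F⁆, F⁆⁆ = (-2 : k) • ⁅J A C, F⁆ + ⁅⁅C, F⁆, ⁅A, F⁆⁆ := by
      rw [leibniz_lie A, ← lie_skew A, hJ, hJc C A hC hA, neg_lie, smul_lie]
      module
    rw [e1, add_lie, smul_lie, hJ, lie_lie, hJ A A, hJ C A, lie_smul, lie_smul, hJ, hJ,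
      hJc C A hC hA, hJc _ A hAC hA, hJc C _ hC hAA]
    module
  -- Twofold application of `ad F` to `⁅⁅P, F⁆, Q⁆ = 2 P∘Q`.
  have Fprod : ∀ P Q, ⁅H, P⁆ = (2 : k) • P → ⁅H, Q⁆ = (2 : k) • Q →
      (2 : k) • ⁅⁅J P Q, F⁆, F⁆
        = ⁅⁅P, F⁆, ⁅⁅Q, F⁆, F⁆⁆ - (2 : k) • ⁅⁅Q, F⁆, ⁅⁅P, F⁆, F⁆⁆ := by
    intro P Q hP hQ
    have e := hJ P Q
    have e1 : ∀ u v : g, ⁅⁅u, v⁆, F⁆ = ⁅⁅u, F⁆, v⁆ + ⁅u, ⁅v, F⁆⁆ := by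
      intro u v
      rw [lie_lie u v F, ← lie_skew v ⁅u, F⁆]; abel
    rw [← smul_lie, ← smul_lie, ← e, e1 ⁅P, F⁆ Q, add_lie, e1 ⁅⁅P, F⁆, F⁆ Q, e1 ⁅P, F⁆ ⁅Q, F⁆, cube P hP, zero_lie,
      ← lie_skew ⁅⁅P, F⁆, F⁆ ⁅Q, F⁆]
    module
  have shift : ⁅⁅A, F⁆, ⁅⁅B, F⁆, F⁆⁆ = (-2 : k) • ⁅⁅J A B, F⁆, F⁆ := by
    have e1 := Fprod A B hA hB
    have e2 := Fprod B A hB hA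
    rw [hJc B A hB hA] at e2
    have e3 : (3 : k) • (⁅⁅A, F⁆, ⁅⁅B, F⁆, F⁆⁆ + (2 : k) • ⁅⁅J A B, F⁆, F⁆) = 0 := by
      linear_combination (norm := module) e1 + (2 : k) • e2
    have e4 := (smul_eq_zero.mp e3).resolve_left (by norm_num)
    linear_combination (norm := module) e4
  have q1 := Qform B hB
  have q2 := Qform (J A B) hAB
  have hzF := cube B hB
  have hQw : ⁅H, ⁅⁅A, ⁅⁅B, F⁆, F⁆⁆, A⁆⁆ = (2 : k) • ⁅⁅A, ⁅⁅B, F⁆, F⁆⁆, A⁆ :=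
    weight_lie (weight_lie hA (hwm B hB) (by norm_num : (2 : k) + -2 = 0)) hA (by norm_num)
  have hx : ⁅⁅A, F⁆, A⁆ = (2 : k) • J A A := hJ A A
  have hcomm := abel2 _ _ hAA hA
  generalize hz : ⁅⁅B, F⁆, F⁆ = z at *
  -- Two linear relations between `⁅⁅A, F⁆, Q B⁆`, `⁅⁅A, z⁆, A∘A⁆` and `Q (A∘B)`; eliminating the
  -- middle bracket leaves three times `⁅⁅A, F⁆, Q B⁆ = 2 Q (A∘B)`.
  have r1 : ⁅⁅A, F⁆, ⁅⁅A, z⁆, A⁆⁆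
      = (4 : k) • ⁅⁅A, z⁆, J A A⁆ - (2 : k) • ⁅⁅A, ⁅⁅J A B, F⁆, F⁆⁆, A⁆ := by
    have e1 : ⁅⁅J A A, z⁆, A⁆ = ⁅⁅A, z⁆, J A A⁆ := by
      rw [lie_lie, hcomm, lie_zero, ← lie_skew z A, lie_neg, ← lie_skew ⁅A, z⁆ (J A A)]
      abel
    rw [leibniz_lie ⁅A, F⁆ ⁅A, z⁆ A, leibniz_lie ⁅A, F⁆ A z, hx, shift, add_lie, smul_lie,
      smul_lie, e1, lie_smul, lie_smul, smul_lie]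
    module
  have r2 : (2 : k) • ⁅⁅A, z⁆, J A A⁆
      = (2 : k) • ⁅⁅A, F⁆, ⁅⁅A, z⁆, A⁆⁆ - (2 : k) • ⁅⁅A, ⁅⁅J A B, F⁆, F⁆⁆, A⁆ := by
    have e1 : ⁅⁅A, z⁆, F⁆ = (-2 : k) • ⁅⁅J A B, F⁆, F⁆ := by
      rw [lie_lie, hzF, lie_zero, ← lie_skew z ⁅A, F⁆, shift]; abel
    have e2 : ⁅⁅⁅⁅A, z⁆, A⁆, F⁆, A⁆ = ⁅⁅A, F⁆, ⁅⁅A, z⁆, A⁆⁆ := by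
      rw [hJ, hJ, hJc _ _ hQw hA]
    rw [← lie_smul, ← hx, leibniz_lie ⁅A, z⁆ ⁅A, F⁆ A, leibniz_lie ⁅A, z⁆ A F, add_lie, e1, e2,
      lie_smul, smul_lie]
    module
  have r3 : (3 : k) • (⁅⁅A, F⁆, ⁅⁅A, z⁆, A⁆⁆ - (2 : k) • ⁅⁅A, ⁅⁅J A B, F⁆, F⁆⁆, A⁆) = 0 := by
    linear_combination (norm := module) -r1 - (2 : k) • r2
  have r4 := (smul_eq_zero.mp r3).resolve_left (by norm_num)
  rw [q1, q2, lie_sub, lie_smul, lie_smul, hJ, hJ] at r4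
  have r5 : (8 : k) • (J A (J (J A A) B) - J (J A A) (J A B)) = 0 := by
    linear_combination (norm := module) r4
  exact sub_eq_zero.mp ((smul_eq_zero.mp r5).resolve_left (by norm_num))

end Aux

/-- In a 5-graded Lie algebra with grading given by the semisimple element of an
`sl₂`-triple `(h, e, f)`, the eigenspace `𝔤₂` is closed under `A∘B = ½⁅⁅A,f⁆,B⁆`
and becomes a unital Jordan algebra with unit `e`. -/
theorem g2_unital_jordan_algebra
    (k g : Type*) [Field k] [CharZero k] [LieRing g] [LieAlgebra k g]
    (H E Fg : g)
    (hHE : ⁅H, E⁆ = (2 : k) • E) (hHF : ⁅H, Fg⁆ = (-2 : k) • Fg)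
    (hEF : ⁅E, Fg⁆ = H)
    (hgrade : ∀ x : g, ∃ a b c d e' : g,
      ⁅H, a⁆ = (-2 : k) • a ∧ ⁅H, b⁆ = (-1 : k) • b ∧ ⁅H, c⁆ = 0 ∧
      ⁅H, d⁆ = (1 : k) • d ∧ ⁅H, e'⁆ = (2 : k) • e' ∧ x = a + b + c + d + e') :
    ∀ A B : g, ⁅H, A⁆ = (2 : k) • A → ⁅H, B⁆ = (2 : k) • B →
      ⁅H, jordanMul k Fg A B⁆ = (2 : k) • jordanMul k Fg A B ∧
      jordanMul k Fg A B = jordanMul k Fg B A ∧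
      jordanMul k Fg E A = A ∧ jordanMul k Fg A E = A ∧
      jordanMul k Fg (jordanMul k Fg (jordanMul k Fg A A) B) A
        = jordanMul k Fg (jordanMul k Fg A A) (jordanMul k Fg B A) := by
  have hpos : ∀ x : g, ⁅H, x⁆ = (4 : k) • x → x = 0 :=
    fun x hx => eq_zero_of_weight hgrade hx (by norm_num)
  have hneg : ∀ x : g, ⁅H, x⁆ = (-4 : k) • x → x = 0 :=
    fun x hx => eq_zero_of_weight hgrade hx (by norm_num)
  have hJ : ∀ P Q : g, ⁅⁅P, Fg⁆, Q⁆ = (2 : k) • jordanMul k Fg P Q := by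
    intro P Q
    rw [jordanMul, smul_smul, mul_inv_cancel₀ two_ne_zero, one_smul]
  have hJw : ∀ P Q : g, ⁅H, P⁆ = (2 : k) • P → ⁅H, Q⁆ = (2 : k) • Q →
      ⁅H, jordanMul k Fg P Q⁆ = (2 : k) • jordanMul k Fg P Q := by
    intro P Q hP hQ
    rw [jordanMul, lie_smul, smul_comm (2 : k),
      weight_lie (weight_lie hP hHF (by norm_num : (2 : k) + -2 = 0)) hQ (zero_add 2)]
  have hJc : ∀ P Q : g, ⁅H, P⁆ = (2 : k) • P → ⁅H, Q⁆ = (2 : k) • Q →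
      jordanMul k Fg P Q = jordanMul k Fg Q P := by
    intro P Q hP hQ
    have h0 : ⁅P, Q⁆ = 0 := hpos _ (weight_lie hP hQ (by norm_num))
    rw [jordanMul, jordanMul, lie_lie P Fg Q, h0, lie_zero, sub_zero, ← lie_skew Fg Q, lie_neg,
      lie_skew]
  have hE : ∀ P : g, ⁅H, P⁆ = (2 : k) • P → jordanMul k Fg E P = P := by
    intro P hP
    rw [jordanMul, hEF, hP, smul_smul, inv_mul_cancel₀ two_ne_zero, one_smul]
  intro A B hA hB
  have hAA := hJw A A hA hA
  refine ⟨hJw A B hA hB, hJc A B hA hB, hE A hA, (hJc A E hA hHE).trans (hE A hA), ?_⟩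
  rw [hJc _ A (hJw _ B hAA hB) hA, hJc B A hB hA]
  exact jordan_identity hHF hpos hneg (jordanMul k Fg) hJ hJw hJc hA hB
end

section
/- The eigenspace 𝔤₁ is a unital special Jordan module for the Jordan algebra (𝔤₂, ∘) under the action A•X = ⁅⁅A,f⁆,X⁆: for all A, B ∈ 𝔤₂ and X ∈ 𝔤₁ one has A•X ∈ 𝔤₁, e•X = X, and (A∘B)•X = ½( A•(B•X) + B•(A•X) ). -/
/-- The action `A•X = ⁅⁅A,f⁆,X⁆` of `𝔤₂` on `𝔤₁`. -/
def jordanAct {g : Type*} [LieRing g] (f A X : g) : g := ⁅⁅A, f⁆, X⁆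

/-- The eigenvalues of `ad H` add under the bracket. -/
theorem lie_eigen_add {k g : Type*} [Field k] [LieRing g] [LieAlgebra k g]
    {H x y : g} {r s : k} (hx : ⁅H, x⁆ = r • x) (hy : ⁅H, y⁆ = s • y) :
    ⁅H, ⁅x, y⁆⁆ = (r + s) • ⁅x, y⁆ := by
  rw [leibniz_lie, hx, hy, smul_lie, lie_smul, add_smul]

/-- The 5-grading makes `ad H` a root of `T⁵ - 5T³ + 4T = (T+2)(T+1)T(T-1)(T-2)`, so a
scalar which is not a root of this polynomial is not an eigenvalue of `ad H`. -/
theorem eq_zero_of_eigenvalue {k g : Type*} [Field k] [LieRing g] [LieAlgebra k g] {H : g}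
    (hgrade : ∀ x : g, ∃ a b c d e' : g,
      ⁅H, a⁆ = (-2 : k) • a ∧ ⁅H, b⁆ = (-1 : k) • b ∧ ⁅H, c⁆ = 0 ∧
      ⁅H, d⁆ = (1 : k) • d ∧ ⁅H, e'⁆ = (2 : k) • e' ∧ x = a + b + c + d + e')
    {r : k} (hr : r ^ 5 - 5 * r ^ 3 + 4 * r ≠ 0) {x : g} (hx : ⁅H, x⁆ = r • x) : x = 0 := by
  have key : ⁅H, ⁅H, ⁅H, ⁅H, ⁅H, x⁆⁆⁆⁆⁆ - (5 : k) • ⁅H, ⁅H, ⁅H, x⁆⁆⁆ + (4 : k) • ⁅H, x⁆ = 0 := by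
    obtain ⟨a, b, c, d, e', ha, hb, hc, hd, he, rfl⟩ := hgrade x
    clear hx
    simp only [lie_add, lie_smul, lie_zero, ha, hb, hc, hd, he]
    module
  simp only [hx, lie_smul] at key
  have h : (r ^ 5 - 5 * r ^ 3 + 4 * r) • x = 0 := by
    rw [← key]
    module
  exact (smul_eq_zero.mp h).resolve_left hr

/-- In a 5-graded Lie algebra with grading given by the semisimple element of an
`sl₂`-triple `(h, e, f)`, the eigenspace `𝔤₁` is a unital special Jordan module for
the Jordan algebra `(𝔤₂, ∘)` under the action `A•X = ⁅⁅A,f⁆,X⁆`. -/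
theorem g1_special_jordan_module
    (k g : Type*) [Field k] [CharZero k] [LieRing g] [LieAlgebra k g]
    (H E Fg : g)
    (hHE : ⁅H, E⁆ = (2 : k) • E) (hHF : ⁅H, Fg⁆ = (-2 : k) • Fg)
    (hEF : ⁅E, Fg⁆ = H)
    (hgrade : ∀ x : g, ∃ a b c d e' : g,
      ⁅H, a⁆ = (-2 : k) • a ∧ ⁅H, b⁆ = (-1 : k) • b ∧ ⁅H, c⁆ = 0 ∧
      ⁅H, d⁆ = (1 : k) • d ∧ ⁅H, e'⁆ = (2 : k) • e' ∧ x = a + b + c + d + e') :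
    ∀ A B X : g, ⁅H, A⁆ = (2 : k) • A → ⁅H, B⁆ = (2 : k) • B →
      ⁅H, X⁆ = (1 : k) • X →
      ⁅H, jordanAct Fg A X⁆ = (1 : k) • jordanAct Fg A X ∧
      jordanAct Fg E X = X ∧
      jordanAct Fg (jordanMul k Fg A B) X
        = (2 : k)⁻¹ • (jordanAct Fg A (jordanAct Fg B X)
            + jordanAct Fg B (jordanAct Fg A X)) := by
  intro A B X hA hB hX
  have hAf : ⁅H, ⁅A, Fg⁆⁆ = (0 : k) • ⁅A, Fg⁆ := by
    have := lie_eigen_add hA hHF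
    rwa [add_neg_cancel] at this
  have hAX : ⁅H, ⁅⁅A, Fg⁆, X⁆⁆ = (1 : k) • ⁅⁅A, Fg⁆, X⁆ := by
    have := lie_eigen_add hAf hX
    rwa [zero_add] at this
  have h3 : ∀ C Y : g, ⁅H, C⁆ = (2 : k) • C → ⁅H, Y⁆ = (1 : k) • Y → ⁅C, Y⁆ = 0 :=
    fun C Y hC hY ↦ eq_zero_of_eigenvalue hgrade (by norm_num) (lie_eigen_add hC hY)
  have hffX : ⁅Fg, ⁅Fg, X⁆⁆ = 0 :=
    eq_zero_of_eigenvalue hgrade (by norm_num) (lie_eigen_add hHF (lie_eigen_add hHF hX))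
  refine ⟨hAX, ?_, ?_⟩
  · rw [jordanAct, hEF, hX, one_smul]
  have hcomm : ∀ C Y : g, ⁅H, C⁆ = (2 : k) • C → ⁅H, Y⁆ = (1 : k) • Y →
      ⁅C, ⁅Fg, Y⁆⁆ = ⁅⁅C, Fg⁆, Y⁆ := by
    intro C Y hC hY
    rw [leibniz_lie, h3 C Y hC hY, lie_zero, add_zero]
  have h1 : ⁅⁅A, Fg⁆, ⁅Fg, X⁆⁆ = -⁅Fg, ⁅⁅A, Fg⁆, X⁆⁆ := by
    rw [lie_lie A Fg ⁅Fg, X⁆, hffX, lie_zero, zero_sub, hcomm A X hA hX]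
  have h2 : ⁅⁅⁅A, Fg⁆, Fg⁆, X⁆ = (-2 : k) • ⁅Fg, ⁅⁅A, Fg⁆, X⁆⁆ := by
    rw [lie_lie ⁅A, Fg⁆ Fg X, h1]
    module
  have h4 : ⁅⁅B, ⁅⁅A, Fg⁆, Fg⁆⁆, X⁆ = (-2 : k) • ⁅⁅B, Fg⁆, ⁅⁅A, Fg⁆, X⁆⁆ := by
    rw [lie_lie B _ X, h3 B X hB hX, lie_zero, sub_zero, h2, lie_smul, hcomm B _ hB hAX]
  have h5 : ⁅⁅⁅A, Fg⁆, B⁆, Fg⁆ = ⁅⁅A, Fg⁆, ⁅B, Fg⁆⁆ - ⁅B, ⁅⁅A, Fg⁆, Fg⁆⁆ := lie_lie _ _ _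
  simp only [jordanAct, jordanMul, smul_lie]
  rw [h5, sub_lie, h4, lie_lie ⁅A, Fg⁆ ⁅B, Fg⁆ X]
  module
end

section
/- The J-ternary axioms (JT3) and (JT4) hold for the triple product on 𝔤₁: for all X, Y, Z ∈ 𝔤₁, ⟨X,Y,Z⟩ = ⟨Z,Y,X⟩ − ⟨X|Z⟩•Y and ⟨X,Y,Z⟩ = ⟨Y,X,Z⟩ + ⟨X|Y⟩•Z. -/
/-- The pairing `⟨X|Y⟩ = ½⁅X,Y⁆ ∈ 𝔤₂` on `𝔤₁`. -/
def jPair (k : Type*) {g : Type*} [Field k] [LieRing g] [LieAlgebra k g]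
    (X Y : g) : g := (2 : k)⁻¹ • ⁅X, Y⁆

/-- The triple product `⟨X,Y,Z⟩ = ½⁅⁅X,⁅Y,f⁆⁆,Z⁆` on `𝔤₁`. -/
def jTriple (k : Type*) {g : Type*} [Field k] [LieRing g] [LieAlgebra k g]
    (f X Y Z : g) : g := (2 : k)⁻¹ • ⁅⁅X, ⁅Y, f⁆⁆, Z⁆

/-- A 5-graded Lie algebra has no component of degree `3`: by the decomposition, `ad H` is
annihilated by `t⁵ - 5t³ + 4t = t(t² - 1)(t² - 4)`, which takes the value `120 ≠ 0` at `3`. -/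
theorem eq_zero_of_degree_three {k g : Type*} [Field k] [CharZero k] [LieRing g] [LieAlgebra k g]
    {H : g}
    (hgrade : ∀ x : g, ∃ a b c d e' : g,
      ⁅H, a⁆ = (-2 : k) • a ∧ ⁅H, b⁆ = (-1 : k) • b ∧ ⁅H, c⁆ = 0 ∧
      ⁅H, d⁆ = (1 : k) • d ∧ ⁅H, e'⁆ = (2 : k) • e' ∧ x = a + b + c + d + e')
    {w : g} (hw : ⁅H, w⁆ = (3 : k) • w) : w = 0 := by
  obtain ⟨a, b, c, d, e, ha, hb, hc, hd, he, h0⟩ := hgrade w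
  have h1 := congrArg (fun x => ⁅H, x⁆) h0
  simp only [lie_add, hw, ha, hb, hc, hd, he] at h1
  have h2 := congrArg (fun x => ⁅H, x⁆) h1
  simp only [lie_add, lie_smul, lie_zero, hw, ha, hb, hd, he] at h2
  have h3 := congrArg (fun x => ⁅H, x⁆) h2
  simp only [lie_add, lie_smul, lie_zero, hw, ha, hb, hd, he] at h3
  have h4 := congrArg (fun x => ⁅H, x⁆) h3
  simp only [lie_add, lie_smul, lie_zero, hw, ha, hb, hd, he] at h4
  have h5 := congrArg (fun x => ⁅H, x⁆) h4
  simp only [lie_add, lie_smul, lie_zero, hw, ha, hb, hd, he] at h5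
  have h120 : (120 : k) • w = 0 := by
    linear_combination (norm := module) h5 - (5 : k) • h3 + (4 : k) • h1
  exact (smul_eq_zero.mp h120).resolve_left (by norm_num)

/-- Axioms (JT3) and (JT4) for the `J`-ternary structure on `(𝔤₂, 𝔤₁)` coming
from a 5-graded Lie algebra with an `sl₂`-triple `(h, e, f)`. -/
theorem jternary_JT3_JT4
    (k g : Type*) [Field k] [CharZero k] [LieRing g] [LieAlgebra k g]
    (H E Fg : g)
    (hHE : ⁅H, E⁆ = (2 : k) • E) (hHF : ⁅H, Fg⁆ = (-2 : k) • Fg)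
    (hEF : ⁅E, Fg⁆ = H)
    (hgrade : ∀ x : g, ∃ a b c d e' : g,
      ⁅H, a⁆ = (-2 : k) • a ∧ ⁅H, b⁆ = (-1 : k) • b ∧ ⁅H, c⁆ = 0 ∧
      ⁅H, d⁆ = (1 : k) • d ∧ ⁅H, e'⁆ = (2 : k) • e' ∧ x = a + b + c + d + e') :
    ∀ X Y Z : g,
      ⁅H, X⁆ = (1 : k) • X → ⁅H, Y⁆ = (1 : k) • Y → ⁅H, Z⁆ = (1 : k) • Z →
      jTriple k Fg X Y Z
        = jTriple k Fg Z Y X - jordanAct Fg (jPair k X Z) Y ∧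
      jTriple k Fg X Y Z
        = jTriple k Fg Y X Z + jordanAct Fg (jPair k X Y) Z := by
  intro X Y Z hX hY hZ
  have hXZ : ⁅⁅X, Z⁆, Y⁆ = 0 := by
    refine eq_zero_of_degree_three hgrade (H := H) ?_
    rw [leibniz_lie H, leibniz_lie H X Z, hX, hY, hZ]
    simp only [one_smul, add_lie]
    module
  simp only [jTriple, jordanAct, jPair, smul_lie]
  constructor
  · rw [← smul_sub]
    congr 1
    have e1 : ⁅⁅X, ⁅Y, Fg⁆⁆, Z⁆ = ⁅⁅Z, ⁅Y, Fg⁆⁆, X⁆ + ⁅⁅X, Z⁆, ⁅Y, Fg⁆⁆ := by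
      rw [lie_lie X Z, ← lie_skew _ Z, ← lie_skew _ X]
      abel
    rw [e1, leibniz_lie ⁅X, Z⁆ Y Fg, hXZ, zero_lie, zero_add, ← lie_skew Y ⁅⁅X, Z⁆, Fg⁆]
    abel
  · rw [← smul_add, ← add_lie, lie_lie X Y Fg]
    congr 2
    abel
end

section
/- The J-ternary axiom (JT6) holds for the triple product on 𝔤₁: for all X, Y, Z, W, U ∈ 𝔤₁, ⟨X,Y,⟨Z,W,U⟩⟩ = ⟨⟨X,Y,Z⟩,W,U⟩ + ⟨Z,⟨Y,X,W⟩,U⟩ + ⟨Z,W,⟨X,Y,U⟩⟩. -/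
/-- `ad H` satisfies `t (t² - 1) (t² - 4) = 0`, so it has no eigenvalue outside the five grading
degrees. -/
theorem eq_zero_of_lie_eq_smul {k g : Type*} [Field k] [LieRing g] [LieAlgebra k g] {H : g}
    (hgrade : ∀ x : g, ∃ a b c d e' : g,
      ⁅H, a⁆ = (-2 : k) • a ∧ ⁅H, b⁆ = (-1 : k) • b ∧ ⁅H, c⁆ = 0 ∧
      ⁅H, d⁆ = (1 : k) • d ∧ ⁅H, e'⁆ = (2 : k) • e' ∧ x = a + b + c + d + e')
    {t : k} (ht : t * (t ^ 2 - 1) * (t ^ 2 - 4) ≠ 0) {x : g} (hx : ⁅H, x⁆ = t • x) : x = 0 := by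
  obtain ⟨a, b, c, d, e, ha, hb, hc, hd, he, h⟩ := hgrade x
  have key : ⁅H, ⁅H, ⁅H, ⁅H, ⁅H, x⁆⁆⁆⁆⁆ - (5 : k) • ⁅H, ⁅H, ⁅H, x⁆⁆⁆ + (4 : k) • ⁅H, x⁆ = 0 := by
    rw [h]
    simp only [lie_add, lie_smul, ha, hb, hc, hd, he, lie_zero]
    module
  simp only [hx, lie_smul] at key
  refine (smul_eq_zero.mp ?_).resolve_left ht
  rw [← key]
  module

/-- The Leibniz rule for the degree of homogeneous elements. -/
theorem lie_lie_eq_smul {k g : Type*} [Field k] [LieRing g] [LieAlgebra k g] {H x y : g}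
    {s t : k} (hx : ⁅H, x⁆ = s • x) (hy : ⁅H, y⁆ = t • y) :
    ⁅H, ⁅x, y⁆⁆ = (s + t) • ⁅x, y⁆ := by
  rw [leibniz_lie, hx, hy, smul_lie, lie_smul, add_smul]

/-- The twisted equivariance of `⁅·, f⁆ : 𝔤₁ → 𝔤₋₁`: it carries the action of `⁅Y, ⁅X, f⁆⁆` to that
of `⁅X, ⁅Y, f⁆⁆`. The hypotheses are the instances of `𝔤₋₃ = 0` and `𝔤₃ = 0` that it depends on. -/
theorem lie_lie_lie_eq (k : Type*) {g : Type*} [Field k] [CharZero k] [LieRing g] [LieAlgebra k g]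
    {F X Y W : g} (hX : ⁅⁅X, F⁆, F⁆ = 0) (hY : ⁅⁅Y, F⁆, F⁆ = 0) (hW : ⁅⁅W, F⁆, F⁆ = 0)
    (hXYW : ⁅⁅X, Y⁆, W⁆ = 0) :
    ⁅⁅X, ⁅Y, F⁆⁆, ⁅W, F⁆⁆ = ⁅⁅⁅Y, ⁅X, F⁆⁆, W⁆, F⁆ := by
  -- The Leibniz rule for the derivation `⁅·, F⁆`.
  have L : ∀ u v : g, ⁅⁅u, v⁆, F⁆ = ⁅⁅u, F⁆, v⁆ + ⁅u, ⁅v, F⁆⁆ := fun u v => by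
    rw [lie_lie u v F, ← lie_skew v ⁅u, F⁆]
    abel
  have h2 : ⁅⁅⁅⁅X, Y⁆, W⁆, F⁆, F⁆ = 0 := by rw [hXYW, zero_lie, zero_lie]
  -- Half of the expansion of `⁅⁅⁅⁅X, Y⁆, W⁆, F⁆, F⁆ = 0`.
  have key : ⁅⁅⁅X, F⁆, ⁅Y, F⁆⁆, W⁆
      + (⁅⁅⁅X, F⁆, Y⁆, ⁅W, F⁆⁆ + ⁅⁅X, ⁅Y, F⁆⁆, ⁅W, F⁆⁆) = 0 := by
    simp only [L ⁅X, Y⁆ W, L X Y, L ⁅X, F⁆ Y, L X ⁅Y, F⁆, L ⁅⁅X, F⁆, Y⁆ W, L ⁅X, ⁅Y, F⁆⁆ W,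
      L ⁅X, Y⁆ ⁅W, F⁆, add_lie, hX, hY, hW, zero_lie, lie_zero] at h2
    refine (smul_eq_zero.mp ?_).resolve_left (two_ne_zero : (2 : k) ≠ 0)
    rw [← h2]
    module
  have e1 : ⁅Y, ⁅X, F⁆⁆ = -⁅⁅X, F⁆, Y⁆ := (lie_skew _ _).symm
  rw [e1, neg_lie, neg_lie, L, L ⁅X, F⁆, hX, zero_lie, zero_add, ← sub_eq_zero, ← key]
  abel

/-- Axiom (JT6) for the `J`-ternary structure on `(𝔤₂, 𝔤₁)` coming from a
5-graded Lie algebra with an `sl₂`-triple `(h, e, f)`. -/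
theorem jternary_JT6
    (k g : Type*) [Field k] [CharZero k] [LieRing g] [LieAlgebra k g]
    (H E Fg : g)
    (hHE : ⁅H, E⁆ = (2 : k) • E) (hHF : ⁅H, Fg⁆ = (-2 : k) • Fg)
    (hEF : ⁅E, Fg⁆ = H)
    (hgrade : ∀ x : g, ∃ a b c d e' : g,
      ⁅H, a⁆ = (-2 : k) • a ∧ ⁅H, b⁆ = (-1 : k) • b ∧ ⁅H, c⁆ = 0 ∧
      ⁅H, d⁆ = (1 : k) • d ∧ ⁅H, e'⁆ = (2 : k) • e' ∧ x = a + b + c + d + e') :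
    ∀ X Y Z W U : g,
      ⁅H, X⁆ = (1 : k) • X → ⁅H, Y⁆ = (1 : k) • Y → ⁅H, Z⁆ = (1 : k) • Z →
      ⁅H, W⁆ = (1 : k) • W → ⁅H, U⁆ = (1 : k) • U →
      jTriple k Fg X Y (jTriple k Fg Z W U)
        = jTriple k Fg (jTriple k Fg X Y Z) W U
          + jTriple k Fg Z (jTriple k Fg Y X W) U
          + jTriple k Fg Z W (jTriple k Fg X Y U) := by
  intro X Y Z W U hX hY _ hW _
  have kill : ∀ x : g, ⁅H, x⁆ = (1 : k) • x → ⁅⁅x, Fg⁆, Fg⁆ = 0 := fun x hx =>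
    eq_zero_of_lie_eq_smul hgrade (by norm_num)
      (lie_lie_eq_smul (lie_lie_eq_smul hx hHF) hHF)
  have hXYW : ⁅⁅X, Y⁆, W⁆ = 0 :=
    eq_zero_of_lie_eq_smul hgrade (by norm_num)
      (lie_lie_eq_smul (lie_lie_eq_smul hX hY) hW)
  simp only [jTriple, lie_smul, smul_lie]
  rw [← lie_lie_lie_eq k (kill X hX) (kill Y hY) (kill W hW) hXYW,
    leibniz_lie ⁅X, ⁅Y, Fg⁆⁆ ⁅Z, ⁅W, Fg⁆⁆ U, leibniz_lie ⁅X, ⁅Y, Fg⁆⁆ Z ⁅W, Fg⁆, add_lie]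
  module
end
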